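/- Let q, p, m ≥ 1 be integers with p ≤ 2m, and let ψ : ℝ → ℝ satisfy |ψ(x)| ≤ c₀·exp(c₁x²/(4m)) for some constants c₀ > 0 and 0 < c₁ < 1, and μ_k(ψ) = E_{G~N(0,1)}[ψ(G)He_k(G)] = 0 for all k = 0,1,…,2q. Fix ε > 0 and C > 0. Then there exists C′ > 0, depending only on c₀, c₁, C, q, m, such that for all d sufficiently large the following holds: for every covariance matrix Σ ∈ ℝ^{p×p} with Σ_{11} = … = Σ_{pp} = 1 and max_{i≠j} |Σ_{ij}| ≤ C·d^{ε−1/2}, every positive integers r₁,…,r_p with r₁+…+r_p = 2m such that r_k = 1 for some k, and g = (g₁,…,g_p) ~ N(0,Σ): |E_g[ ∏_{k=1}^p ψ(g_k)^{r_k} ]| ≤ C′·d^{(q+1)(ε−1/2)}. -/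

import Mathlib

/-!
Let `δ = C * d ^ (ε - 1 / 2)` and let `k` be an index with `r k = 1`. If `ε ≥ 1 / 2`, the claimed
bound is at least a constant, and the moment is uniformly bounded: the integrand is at most
`c₀ ^ (2m) * exp (c₁ / (4m) * ∑ i, r i * x i ^ 2)`, and since the weights `r i / (2m)` sum to one,
Jensen's inequality bounds its mean by `c₀ ^ (2m) * E exp (c₁ * G ^ 2 / 2)` with `G` standard
Gaussian (`integral_exp_quadratic_le`).

If `ε < 1 / 2`, then `δ → 0`. By Gaussian regression (`exists_regression`, `map_regression_eq`),
coordinate `k` may be written as `a + τ Z`, with `Z` an independent standard Gaussian, `a` a linear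
form in the other coordinates with coefficients of order `δ`, and `1 - τ ^ 2` of order `δ`.
As `ψ (g k)` enters the product to the first power, the moment is the mean of
`(∏ i ≠ k, ψ (x i) ^ r i) * E ψ (a + τ Z)`. Passing to the density of `N(a, τ ^ 2)` relative to
`N(0, 1)`, `E ψ (a + τ Z) = τ⁻¹ * E (ψ Z * exp (W Z))` with `W` a quadratic polynomial whose
coefficients are small (`integral_shift_eq`, `abs_tiltPoly_le`). The Taylor polynomial of order `q`
of `exp ∘ W` has degree at most `2q`, hence is orthogonal to `ψ`, and only the remainder is left
(`integral_shift_eq_remainder`). The remainder is at most `|W| ^ (q + 1) * exp |W|`, which yields the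
factor `δ ^ (q + 1)`; its growth is absorbed by raising the rate `c₁` to `(1 + c₁) / 2 < 1`, and
Jensen's inequality applies again, now to the law in which coordinate `k` is resampled
independently (`map_coord_update_eq`, `abs_moment_le`).
-/

open MeasureTheory ProbabilityTheory

/-- The `k`-th probabilists' Hermite polynomial, evaluated at a real number. -/
noncomputable def HePoly (k : ℕ) (x : ℝ) : ℝ :=
  Polynomial.aeval x (Polynomial.hermite k)

/-! ### One-dimensional Gaussian estimates -/

lemma integrable_exp_sq_gaussian {c : ℝ} (hc : c < 1) :
    Integrable (fun x : ℝ => Real.exp (c * x ^ 2 / 2)) (gaussianReal 0 1) := by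
  rw [gaussianReal_of_var_ne_zero 0 one_ne_zero,
    integrable_withDensity_iff (measurable_gaussianPDF 0 1)
      (Filter.Eventually.of_forall fun _ => gaussianPDF_lt_top)]
  have h := (integrable_exp_neg_mul_sq (b := (1 - c) / 2) (by linarith)).const_mul
    ((Real.sqrt (2 * Real.pi))⁻¹)
  refine h.congr (Filter.Eventually.of_forall fun x => ?_)
  simp only [toReal_gaussianPDF, gaussianPDFReal, sub_zero, NNReal.coe_one, mul_one]
  rw [mul_left_comm, ← Real.exp_add]
  congr 2
  ring

/-- Powers are absorbed by an arbitrarily small exponential rate. -/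
lemma pow_le_const_mul_exp {η R : ℝ} (hη : 0 < η) (hR : 0 ≤ R) (n : ℕ) :
    R ^ n ≤ n.factorial / η ^ n * Real.exp (η * R) := by
  have h := Real.pow_div_factorial_le_exp (x := η * R) (by positivity) n
  rw [mul_pow, div_le_iff₀ (by positivity)] at h
  rw [div_mul_eq_mul_div, le_div_iff₀ (by positivity)]
  linarith

lemma abs_exp_sub_taylor_le (x : ℝ) (n : ℕ) :
    |Real.exp x - ∑ j ∈ Finset.range n, x ^ j / j.factorial| ≤ |x| ^ n * Real.exp |x| := by
  have h := Complex.norm_exp_sub_sum_le_norm_mul_exp (x : ℂ) n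
  have e : Complex.exp x - ∑ j ∈ Finset.range n, (x : ℂ) ^ j / j.factorial
      = ((Real.exp x - ∑ j ∈ Finset.range n, x ^ j / j.factorial : ℝ) : ℂ) := by
    push_cast; rfl
  rw [e, Complex.norm_real, Complex.norm_real] at h
  simpa using h

lemma integrable_mul_pow_gaussian {ψ : ℝ → ℝ} (hψ : Measurable ψ) {K c : ℝ} (hc : c < 1)
    (hb : ∀ x, |ψ x| ≤ K * Real.exp (c * x ^ 2 / 2)) (n : ℕ) :
    Integrable (fun x => ψ x * x ^ n) (gaussianReal 0 1) := by
  have hK : 0 ≤ K := by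
    have := (abs_nonneg _).trans (hb 0)
    simpa using this
  obtain ⟨η, hη0, hη1⟩ : ∃ η : ℝ, 0 < η ∧ c + 2 * η < 1 := ⟨(1 - c) / 4, by linarith, by linarith⟩
  have h1 := (integrable_exp_sq_gaussian hc).const_mul K
  have h2 := (integrable_exp_sq_gaussian hη1).const_mul (K * (n.factorial / η ^ n))
  refine (h1.add h2).mono' (by fun_prop) (Filter.Eventually.of_forall fun x => ?_)
  have hx : |x| ^ n ≤ 1 + n.factorial / η ^ n * Real.exp (η * x ^ 2) := by
    have h3 := pow_le_const_mul_exp hη0 (sq_nonneg x) n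
    have h4 : |x| ^ n ≤ 1 + (x ^ 2) ^ n := by
      rw [← sq_abs, ← pow_mul, mul_comm, pow_mul]
      nlinarith [sq_nonneg (|x| ^ n - 1), sq_nonneg (|x| ^ n)]
    linarith
  rw [Real.norm_eq_abs, abs_mul, abs_pow]
  calc |ψ x| * |x| ^ n
      ≤ (K * Real.exp (c * x ^ 2 / 2)) * (1 + n.factorial / η ^ n * Real.exp (η * x ^ 2)) := by
        gcongr; exact hb x
    _ = K * Real.exp (c * x ^ 2 / 2) + K * (n.factorial / η ^ n) *
          (Real.exp (c * x ^ 2 / 2) * Real.exp (η * x ^ 2)) := by ring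
    _ = _ := by
        rw [← Real.exp_add]
        simp only [Pi.add_apply]
        congr 4
        ring

lemma integrable_mul_poly_gaussian {ψ : ℝ → ℝ} (hψ : Measurable ψ) {K c : ℝ} (hc : c < 1)
    (hb : ∀ x, |ψ x| ≤ K * Real.exp (c * x ^ 2 / 2)) (P : Polynomial ℝ) :
    Integrable (fun x => ψ x * P.eval x) (gaussianReal 0 1) := by
  induction P using Polynomial.induction_on' with
  | add p q hp hq =>
    simp only [Polynomial.eval_add, mul_add]
    exact hp.add hq
  | monomial n a =>
    have := (integrable_mul_pow_gaussian hψ hc hb n).const_mul a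
    refine this.congr (Filter.Eventually.of_forall fun x => ?_)
    simp only [Polynomial.eval_monomial]
    ring

/-- A function orthogonal to the Hermite polynomials of degree at most `N` is orthogonal to every
polynomial of degree at most `N`, because the Hermite polynomials are monic. -/
lemma integral_mul_poly_eq_zero {ψ : ℝ → ℝ} (hψ : Measurable ψ) {K c : ℝ} (hc : c < 1)
    (hb : ∀ x, |ψ x| ≤ K * Real.exp (c * x ^ 2 / 2)) {N : ℕ}
    (horth : ∀ k ≤ N, ∫ x, ψ x * HePoly k x ∂(gaussianReal 0 1) = 0)
    (P : Polynomial ℝ) (hP : P.natDegree ≤ N) :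
    ∫ x, ψ x * P.eval x ∂(gaussianReal 0 1) = 0 := by
  have key : ∀ n ≤ N + 1, ∀ P : Polynomial ℝ, P.degree < n →
      ∫ x, ψ x * P.eval x ∂(gaussianReal 0 1) = 0 := by
    intro n
    induction n with
    | zero =>
      intro _ P hP
      have : P = 0 := by
        rw [← Polynomial.degree_eq_bot]
        exact Polynomial.degree_eq_bot.2 (by
          by_contra h
          have := Polynomial.zero_le_degree_iff.2 h
          exact absurd (lt_of_lt_of_le hP (by simpa using this)) (lt_irrefl _))
      simp [this]
    | succ n ih =>
      intro hn P hP
      set H : Polynomial ℝ := (Polynomial.hermite n).map (Int.castRingHom ℝ) with hH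
      have hHm : H.Monic := (Polynomial.hermite_monic n).map _
      have hHd : H.degree = n := by
        rw [hH, (Polynomial.hermite_monic n).degree_map, Polynomial.degree_hermite]
      have hHe : ∀ x, H.eval x = HePoly n x := by
        intro x
        rw [hH, HePoly, Polynomial.eval_map, Polynomial.aeval_def]
        rfl
      set Q := P - Polynomial.C (P.coeff n) * H with hQ
      have hQd : Q.degree < n := by
        rw [Polynomial.degree_lt_iff_coeff_zero]
        intro k hk
        rcases hk.eq_or_lt with rfl | hk
        · have : H.coeff n = 1 := by
            have := hHm.coeff_natDegree
            rwa [Polynomial.natDegree_eq_of_degree_eq_some hHd] at this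
          simp [hQ, this]
        · have h1 : P.coeff k = 0 := (Polynomial.degree_lt_iff_coeff_zero _ _).1 hP k hk
          have h2 : H.coeff k = 0 := Polynomial.coeff_eq_zero_of_degree_lt (by
            rw [hHd]; exact_mod_cast hk)
          simp [hQ, h1, h2]
      have e : ∀ x, ψ x * P.eval x = ψ x * Q.eval x + P.coeff n * (ψ x * HePoly n x) := by
        intro x
        rw [← hHe, hQ]
        simp only [Polynomial.eval_sub, Polynomial.eval_mul, Polynomial.eval_C]
        ring
      have hi : Integrable (fun x => ψ x * HePoly n x) (gaussianReal 0 1) := by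
        simpa only [hHe] using integrable_mul_poly_gaussian hψ hc hb H
      simp_rw [e]
      rw [integral_add (integrable_mul_poly_gaussian hψ hc hb Q) (hi.const_mul _),
        integral_const_mul, ih (by omega) Q hQd, horth n (by omega)]
      simp
  refine key (N + 1) le_rfl P ?_
  exact lt_of_le_of_lt Polynomial.degree_le_natDegree (by exact_mod_cast Nat.lt_succ_of_le hP)

/-- The exponent of the density of `N(a, τ²)` relative to `N(0, 1)`, as a quadratic polynomial. -/
noncomputable def tiltPoly (a τ : ℝ) : Polynomial ℝ :=
  Polynomial.C ((2 * τ ^ 2)⁻¹) * (Polynomial.C (2 * a) * Polynomial.X - Polynomial.C (a ^ 2)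
    - Polynomial.C (1 - τ ^ 2) * Polynomial.X ^ 2)

lemma tiltPoly_eval (a τ z : ℝ) :
    (tiltPoly a τ).eval z = (2 * τ ^ 2)⁻¹ * (2 * a * z - a ^ 2 - (1 - τ ^ 2) * z ^ 2) := by
  simp [tiltPoly]

lemma tiltPoly_natDegree (a τ : ℝ) : (tiltPoly a τ).natDegree ≤ 2 := by
  unfold tiltPoly
  compute_degree

/-- The Gaussian shift `z ↦ a + τ z` amounts to the weight `τ⁻¹ exp (tiltPoly a τ)`. -/
lemma integral_shift_eq {ψ : ℝ → ℝ} (hψ : Measurable ψ) {a τ : ℝ} (hτ : 0 < τ) :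
    ∫ z, ψ (a + τ * z) ∂(gaussianReal 0 1)
      = ∫ z, ψ z * (τ⁻¹ * Real.exp ((tiltPoly a τ).eval z)) ∂(gaussianReal 0 1) := by
  obtain ⟨v, hv⟩ : ∃ v : NNReal, (v : ℝ) = τ ^ 2 := ⟨(τ ^ 2).toNNReal, by simp [sq_nonneg]⟩
  have hv0 : v ≠ 0 := by
    rintro rfl
    have : 0 < τ ^ 2 := by positivity
    simp [← hv] at this
  have hmap : (gaussianReal 0 1).map (fun z => a + τ * z) = gaussianReal a v := by
    have : (fun z : ℝ => a + τ * z) = (fun z => a + z) ∘ (fun z => τ * z) := rfl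
    rw [this, ← Measure.map_map (by fun_prop) (by fun_prop), gaussianReal_map_const_mul,
      gaussianReal_map_const_add]
    congr 1
    · simp
    · apply NNReal.eq
      rw [hv]
      simp
  have h1 : ∫ z, ψ (a + τ * z) ∂(gaussianReal 0 1) = ∫ z, ψ z ∂(gaussianReal a v) := by
    rw [← hmap, integral_map (by fun_prop) hψ.aestronglyMeasurable]
  rw [h1, integral_gaussianReal_eq_integral_smul hv0,
    integral_gaussianReal_eq_integral_smul one_ne_zero]
  congr 1
  ext z
  simp only [smul_eq_mul, gaussianPDFReal, tiltPoly_eval, hv, NNReal.coe_one,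
    sub_zero, mul_one]
  rw [Real.sqrt_mul (by positivity), Real.sqrt_sq hτ.le, mul_inv]
  have : Real.exp (-(z - a) ^ 2 / (2 * τ ^ 2)) = Real.exp (-z ^ 2 / 2) *
      Real.exp ((2 * τ ^ 2)⁻¹ * (2 * a * z - a ^ 2 - (1 - τ ^ 2) * z ^ 2)) := by
    rw [← Real.exp_add]
    congr 1
    field_simp
    ring
  rw [this]
  ring

/-- The degree-`q` Taylor polynomial of the exponential of the tilt has degree at most `2q` and is
invisible to `ψ`, so only the Taylor remainder contributes. -/
lemma integral_shift_eq_remainder {ψ : ℝ → ℝ} (hψ : Measurable ψ) {K c : ℝ} (hc : c < 1)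
    (hb : ∀ x, |ψ x| ≤ K * Real.exp (c * x ^ 2 / 2)) {q : ℕ}
    (horth : ∀ k ≤ 2 * q, ∫ x, ψ x * HePoly k x ∂(gaussianReal 0 1) = 0)
    {a τ : ℝ} (hτ : 0 < τ)
    (hint : Integrable (fun z => ψ z * (Real.exp ((tiltPoly a τ).eval z)
      - ∑ j ∈ Finset.range (q + 1), (tiltPoly a τ).eval z ^ j / j.factorial)) (gaussianReal 0 1)) :
    ∫ z, ψ (a + τ * z) ∂(gaussianReal 0 1)
      = τ⁻¹ * ∫ z, ψ z * (Real.exp ((tiltPoly a τ).eval z)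
      - ∑ j ∈ Finset.range (q + 1), (tiltPoly a τ).eval z ^ j / j.factorial)
        ∂(gaussianReal 0 1) := by
  set T : Polynomial ℝ := ∑ j ∈ Finset.range (q + 1),
    Polynomial.C ((j.factorial : ℝ)⁻¹) * tiltPoly a τ ^ j with hT
  have hTe : ∀ z, T.eval z
      = ∑ j ∈ Finset.range (q + 1), (tiltPoly a τ).eval z ^ j / j.factorial := by
    intro z
    rw [hT, Polynomial.eval_finsetSum]
    refine Finset.sum_congr rfl fun j _ => ?_
    simp [div_eq_inv_mul]
  have hTd : T.natDegree ≤ 2 * q := by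
    refine Polynomial.natDegree_sum_le_of_forall_le _ _ fun j hj => ?_
    refine (Polynomial.natDegree_C_mul_le _ _).trans (Polynomial.natDegree_pow_le.trans ?_)
    have h1 := tiltPoly_natDegree a τ
    have h2 : j ≤ q := Nat.lt_succ_iff.1 (Finset.mem_range.1 hj)
    calc j * (tiltPoly a τ).natDegree ≤ q * 2 := Nat.mul_le_mul h2 h1
      _ = 2 * q := by ring
  have h0 := integral_mul_poly_eq_zero hψ hc hb horth T hTd
  have hTi := integrable_mul_poly_gaussian hψ hc hb T
  simp_rw [← hTe] at hint ⊢
  have h1 := integral_add hint hTi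
  rw [h0, add_zero] at h1
  rw [integral_shift_eq hψ hτ, ← h1, ← integral_const_mul]
  congr 1
  ext z
  ring

/-! ### Gaussian regression of one coordinate on the others -/

/-- Normalized column `k` of the precision matrix. For `g ~ N(0, Cov)`, the regression of `g k` on
the other coordinates is `-∑ i ≠ k, u i * g i`, and `τ ^ 2` is its residual variance. Diagonal
dominance makes both `u i` (for `i ≠ k`) and `1 - τ ^ 2` small. -/
lemma exists_regression {p : ℕ} {Cov : Matrix (Fin p) (Fin p) ℝ} (hpd : Cov.PosDef)
    (hdiag : ∀ i, Cov i i = 1) {δ : ℝ} (hδ : 0 ≤ δ)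
    (hoff : ∀ i j, i ≠ j → |Cov i j| ≤ δ) (hsmall : p * δ ≤ 1 / 2) (k : Fin p) :
    ∃ (u : Fin p → ℝ) (τ : ℝ), 0 < τ ∧ 1 / 2 ≤ τ ^ 2 ∧ |1 - τ ^ 2| ≤ δ ∧ u k = 1 ∧
      (∀ i, i ≠ k → |u i| ≤ 2 * δ) ∧ Cov.mulVec u = Pi.single k (τ ^ 2) := by
  have hp1 : (1 : ℝ) ≤ p := by
    have : 1 ≤ p := Nat.one_le_iff_ne_zero.2 (by rintro rfl; exact k.elim0)
    exact_mod_cast this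
  have hδ2 : δ ≤ 1 / 2 := by nlinarith
  have hdet : IsUnit Cov.det := (Matrix.isUnit_iff_isUnit_det _).1 hpd.isUnit
  set v : Fin p → ℝ := Cov⁻¹.mulVec (Pi.single k 1) with hv
  have hCv : Cov.mulVec v = Pi.single k 1 := by
    rw [hv, Matrix.mulVec_mulVec, Matrix.mul_nonsing_inv _ hdet, Matrix.one_mulVec]
  have hv0 : v ≠ 0 := by
    intro h
    rw [h, Matrix.mulVec_zero] at hCv
    have := congrFun hCv k
    simp at this
  have hvk : 0 < v k := by
    have := hpd.dotProduct_mulVec_pos hv0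
    rw [hCv] at this
    simpa using this
  have hCu : Cov.mulVec ((v k)⁻¹ • v) = Pi.single k (v k)⁻¹ := by
    rw [Matrix.mulVec_smul, hCv, ← Pi.single_smul]
    simp
  set u : Fin p → ℝ := (v k)⁻¹ • v with hu
  have huk : u k = 1 := by simp [hu, hvk.ne']
  have hrow : ∀ i, u i + ∑ j ∈ Finset.univ.erase i, Cov i j * u j
      = (Pi.single k (v k)⁻¹ : Fin p → ℝ) i := by
    intro i
    rw [← hCu, Matrix.mulVec, dotProduct, ← Finset.add_sum_erase _ _ (Finset.mem_univ i), hdiag,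
      one_mul]
  have hcard : ∀ (i : Fin p) (b : ℝ), ∑ _j ∈ Finset.univ.erase i, b = (p - 1) * b := by
    intro i b
    rw [Finset.sum_const, Finset.card_erase_of_mem (Finset.mem_univ i), Finset.card_univ,
      Fintype.card_fin, nsmul_eq_mul, Nat.cast_sub (by exact_mod_cast hp1)]
    simp
  have hub : ∀ i, i ≠ k → |u i| ≤ 2 * δ := by
    intro i hi
    obtain ⟨i₀, hi₀, hmax⟩ := Finset.exists_max_image (Finset.univ.erase k) (fun i => |u i|)
      ⟨i, by simp [hi]⟩
    have hi₀k : i₀ ≠ k := (Finset.mem_erase.1 hi₀).1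
    have h1 := hrow i₀
    rw [Pi.single_eq_of_ne hi₀k] at h1
    have h2 : |u i₀| ≤ ∑ j ∈ Finset.univ.erase i₀, |Cov i₀ j * u j| := by
      rw [show u i₀ = -∑ j ∈ Finset.univ.erase i₀, Cov i₀ j * u j by linarith, abs_neg]
      exact Finset.abs_sum_le_sum_abs _ _
    have h3 : ∑ j ∈ Finset.univ.erase i₀, |Cov i₀ j * u j|
        ≤ ∑ j ∈ Finset.univ.erase i₀, δ * ((if j = k then 1 else 0) + |u i₀|) := by
      refine Finset.sum_le_sum fun j hj => ?_
      rw [abs_mul]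
      refine mul_le_mul (hoff _ _ (Finset.mem_erase.1 hj).1.symm) ?_ (abs_nonneg _) hδ
      by_cases hjk : j = k
      · simp [hjk, huk]
      · simpa [hjk] using hmax j (by simp [hjk])
    have h4 : ∑ j ∈ Finset.univ.erase i₀, δ * ((if j = k then 1 else 0) + |u i₀|)
        ≤ δ + (p * δ) * |u i₀| := by
      simp only [mul_add]
      rw [Finset.sum_add_distrib, hcard, ← Finset.mul_sum, Finset.sum_ite_eq']
      simp only [Finset.mem_erase, Finset.mem_univ, and_true, hi₀k.symm, ne_eq, not_false_eq_true,
        if_true]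
      have : 0 ≤ δ * |u i₀| := by positivity
      nlinarith
    have h5 := hmax i (by simp [hi])
    have h6 : (p * δ) * |u i₀| ≤ 1 / 2 * |u i₀| := by gcongr
    linarith
  have hτabs : |1 - (v k)⁻¹| ≤ δ := by
    have h1 := hrow k
    rw [Pi.single_eq_same, huk] at h1
    rw [show 1 - (v k)⁻¹ = -∑ j ∈ Finset.univ.erase k, Cov k j * u j by linarith, abs_neg]
    calc |∑ j ∈ Finset.univ.erase k, Cov k j * u j|
        ≤ ∑ j ∈ Finset.univ.erase k, |Cov k j * u j| := Finset.abs_sum_le_sum_abs _ _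
      _ ≤ ∑ j ∈ Finset.univ.erase k, δ * (2 * δ) := by
          refine Finset.sum_le_sum fun j hj => ?_
          rw [abs_mul]
          exact mul_le_mul (hoff _ _ (Finset.mem_erase.1 hj).1.symm)
            (hub j (Finset.mem_erase.1 hj).1) (abs_nonneg _) hδ
      _ = (p - 1) * (δ * (2 * δ)) := hcard _ _
      _ ≤ δ := by nlinarith [mul_nonneg hδ hδ]
  have hsq : Real.sqrt (v k)⁻¹ ^ 2 = (v k)⁻¹ := Real.sq_sqrt (by positivity)
  refine ⟨u, Real.sqrt (v k)⁻¹, Real.sqrt_pos.2 (by positivity), ?_, ?_, huk, hub, ?_⟩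
  · rw [hsq]
    have := (abs_le.1 hτabs).2
    linarith
  · rwa [hsq]
  · rw [hsq, hCu]

/-- Replacing coordinate `k` by its regression on the others plus an independent Gaussian residual
preserves the law. The regression on the other coordinates is written `x k - ∑ i, u i * x i`, where
`u k = 1`. -/
lemma map_regression_eq {p : ℕ} {Cov : Matrix (Fin p) (Fin p) ℝ} (hpd : Cov.PosDef)
    {μ : Measure (Fin p → ℝ)} [IsProbabilityMeasure μ]
    (hμ : ∀ l : Fin p → ℝ, Measure.map (fun x => ∑ i, l i * x i) μ
      = gaussianReal 0 (Real.toNNReal (∑ i, ∑ j, l i * Cov i j * l j)))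
    {k : Fin p} {u : Fin p → ℝ} {τ : ℝ} (huk : u k = 1)
    (hCu : Cov.mulVec u = Pi.single k (τ ^ 2)) :
    (μ.prod (gaussianReal 0 1)).map
      (fun w => Function.update w.1 k (w.1 k - ∑ i, u i * w.1 i + τ * w.2)) = μ := by
  have hquad : ∀ l : Fin p → ℝ, ∑ i, ∑ j, l i * Cov i j * l j = l ⬝ᵥ Cov.mulVec l := by
    intro l
    simp only [dotProduct, Matrix.mulVec, Finset.mul_sum, mul_assoc]
  have hnn : ∀ l : Fin p → ℝ, 0 ≤ l ⬝ᵥ Cov.mulVec l := by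
    intro l
    have := hpd.posSemidef.dotProduct_mulVec_nonneg l
    simpa using this
  have hsymm : Cov.transpose = Cov := by
    have := hpd.isHermitian
    rwa [Matrix.IsHermitian, Matrix.conjTranspose_eq_transpose_of_trivial] at this
  have hΦ : Measurable (fun w : (Fin p → ℝ) × ℝ =>
      Function.update w.1 k (w.1 k - ∑ i, u i * w.1 i + τ * w.2)) := by
    refine measurable_pi_iff.2 fun i => ?_
    by_cases hi : i = k
    · subst hi
      simp only [Function.update_self]
      fun_prop
    · simp only [Function.update_of_ne hi]
      fun_prop
  have := Measure.isProbabilityMeasure_map (μ := μ.prod (gaussianReal 0 1)) hΦ.aemeasurable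
  refine Measure.ext_of_charFunDual (funext fun L => ?_)
  rw [charFunDual_eq_charFun_map_one, charFunDual_eq_charFun_map_one]
  congr 1
  set l : Fin p → ℝ := fun i => L (Pi.single i 1) with hl
  have hL : ∀ x, L x = ∑ i, l i * x i := by
    intro x
    have := LinearMap.pi_apply_eq_sum_univ L.toLinearMap x
    simp only [ContinuousLinearMap.coe_coe, smul_eq_mul] at this
    rw [this]
    refine Finset.sum_congr rfl fun i _ => ?_
    rw [mul_comm, hl]
    congr 2
    ext j
    simp [Pi.single_apply, eq_comm]
  have hLf : (L : (Fin p → ℝ) → ℝ) = fun x => ∑ i, l i * x i := funext hL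
  rw [Measure.map_map (by fun_prop) hΦ, hLf, hμ, hquad]
  set l' : Fin p → ℝ := l - l k • u with hl'
  have hcomp : (fun x : Fin p → ℝ => ∑ i, l i * x i) ∘ (fun w : (Fin p → ℝ) × ℝ =>
      Function.update w.1 k (w.1 k - ∑ i, u i * w.1 i + τ * w.2))
      = (fun s : ℝ × ℝ => s.1 + s.2) ∘
        Prod.map (fun x => ∑ i, l' i * x i) (fun z => (l k * τ) * z) := by
    ext ⟨x, z⟩
    simp only [Function.comp_apply, Prod.map_apply, hl', Pi.sub_apply, Pi.smul_apply, smul_eq_mul,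
      sub_mul, Finset.sum_sub_distrib, mul_assoc, ← Finset.mul_sum]
    rw [← Finset.add_sum_erase _ _ (Finset.mem_univ k), Function.update_self,
      ← Finset.add_sum_erase _ (fun i => l i * x i) (Finset.mem_univ k)]
    have : ∑ i ∈ Finset.univ.erase k, l i * Function.update x k
        (x k - ∑ i, u i * x i + τ * z) i = ∑ i ∈ Finset.univ.erase k, l i * x i :=
      Finset.sum_congr rfl fun i hi => by rw [Function.update_of_ne (Finset.mem_erase.1 hi).1]
    rw [this]
    ring
  rw [hcomp, ← Measure.map_map (by fun_prop) (by fun_prop),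
    ← Measure.map_prod_map _ _ (by fun_prop) (by fun_prop), hμ, hquad, gaussianReal_map_const_mul]
  have hconv := gaussianReal_conv_gaussianReal (m₁ := 0) (m₂ := l k * τ * 0)
    (v₁ := (l' ⬝ᵥ Cov.mulVec l').toNNReal)
    (v₂ := NNReal.mk ((l k * τ) ^ 2) (sq_nonneg _) * 1)
  rw [Measure.conv] at hconv
  refine hconv.trans ?_
  have hvar : l' ⬝ᵥ Cov.mulVec l' + (l k * τ) ^ 2 = l ⬝ᵥ Cov.mulVec l := by
    have h1 : u ⬝ᵥ Cov.mulVec l = l k * τ ^ 2 := by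
      rw [Matrix.dotProduct_mulVec, ← Matrix.mulVec_transpose, hsymm, hCu]
      simp [mul_comm]
    rw [hl', Matrix.mulVec_sub, Matrix.mulVec_smul, sub_dotProduct, dotProduct_sub, dotProduct_sub,
      smul_dotProduct, smul_dotProduct, h1, hCu]
    simp [huk]
    ring
  congr 1
  · simp
  · apply NNReal.eq
    rw [NNReal.coe_add, Real.coe_toNNReal _ (hnn _), Real.coe_toNNReal _ (hnn _), ← hvar]
    simp

/-! ### Majorants -/

/-- By Jensen, `exp (c / (4m) * ∑ i, r i * y i ^ 2)` has expectation at most that of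
`exp (c * G ^ 2 / 2)` with `G` standard Gaussian, whatever the dependence between the standard
Gaussian coordinates `y i`. -/
lemma integral_exp_quadratic_le {p m : ℕ} (hm : 1 ≤ m) {r : Fin p → ℕ} (hr : ∑ i, r i = 2 * m)
    {c : ℝ} (hc : c < 1) {ν : Measure (Fin p → ℝ)}
    (hν : ∀ i, ν.map (fun y => y i) = gaussianReal 0 1) :
    Integrable (fun y => Real.exp (c / (4 * m) * ∑ i, (r i : ℝ) * y i ^ 2)) ν ∧
      ∫ y, Real.exp (c / (4 * m) * ∑ i, (r i : ℝ) * y i ^ 2) ∂ν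
        ≤ ∫ z, Real.exp (c * z ^ 2 / 2) ∂(gaussianReal 0 1) := by
  have hm0 : (0 : ℝ) < m := by exact_mod_cast hm
  have hw : ∑ i, (r i : ℝ) / (2 * m) = 1 := by
    rw [← Finset.sum_div, div_eq_one_iff_eq (by positivity)]
    exact_mod_cast hr
  have hint : ∀ i, Integrable (fun y : Fin p → ℝ => Real.exp (c * y i ^ 2 / 2)) ν := by
    intro i
    have h := integrable_exp_sq_gaussian hc
    rw [← hν i] at h
    exact (integrable_map_measure (f := fun y : Fin p → ℝ => y i) (by fun_prop)
      (measurable_pi_apply i).aemeasurable).1 h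
  have hval : ∀ i, ∫ y, Real.exp (c * y i ^ 2 / 2) ∂ν
      = ∫ z, Real.exp (c * z ^ 2 / 2) ∂(gaussianReal 0 1) := by
    intro i
    rw [← hν i, integral_map (measurable_pi_apply i).aemeasurable (by fun_prop)]
  have hle : ∀ y : Fin p → ℝ, Real.exp (c / (4 * m) * ∑ i, (r i : ℝ) * y i ^ 2)
      ≤ ∑ i, (r i : ℝ) / (2 * m) * Real.exp (c * y i ^ 2 / 2) := by
    intro y
    have h := convexOn_exp.map_sum_le (t := Finset.univ) (w := fun i => (r i : ℝ) / (2 * m))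
      (p := fun i => c * y i ^ 2 / 2) (fun i _ => by positivity) hw (fun i _ => Set.mem_univ _)
    simp only [smul_eq_mul] at h
    refine le_trans (le_of_eq ?_) h
    congr 1
    rw [Finset.mul_sum]
    refine Finset.sum_congr rfl fun i _ => ?_
    field_simp
    ring
  have hsum : Integrable (fun y => ∑ i, (r i : ℝ) / (2 * m) * Real.exp (c * y i ^ 2 / 2)) ν :=
    integrable_finsetSum _ fun i _ => (hint i).const_mul _
  have hI : Integrable (fun y => Real.exp (c / (4 * m) * ∑ i, (r i : ℝ) * y i ^ 2)) ν :=
    hsum.mono' (Measurable.aestronglyMeasurable (by fun_prop)) (Filter.Eventually.of_forall fun y => by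
      rw [Real.norm_eq_abs, Real.abs_exp]; exact hle y)
  refine ⟨hI, (integral_mono hI hsum hle).trans (le_of_eq ?_)⟩
  rw [integral_finsetSum _ fun i _ => (hint i).const_mul _]
  simp_rw [integral_const_mul, hval]
  rw [← Finset.sum_mul, hw, one_mul]

lemma abs_prod_pow_le {p m : ℕ} {r : Fin p → ℕ} (hr : ∑ i, r i = 2 * m) {ψ : ℝ → ℝ} {c₀ c : ℝ}
    (hb : ∀ x, |ψ x| ≤ c₀ * Real.exp (c * x ^ 2 / (4 * m))) (y : Fin p → ℝ) :
    |∏ i, ψ (y i) ^ r i|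
      ≤ c₀ ^ (2 * m) * Real.exp (c / (4 * m) * ∑ i, (r i : ℝ) * y i ^ 2) := by
  rw [Finset.abs_prod]
  calc ∏ i, |ψ (y i) ^ r i|
      ≤ ∏ i, (c₀ * Real.exp (c * y i ^ 2 / (4 * m))) ^ r i := by
        refine Finset.prod_le_prod (fun i _ => abs_nonneg _) fun i _ => ?_
        rw [abs_pow]
        exact pow_le_pow_left₀ (abs_nonneg _) (hb _) _
    _ = c₀ ^ (2 * m) * Real.exp (c / (4 * m) * ∑ i, (r i : ℝ) * y i ^ 2) := by
        simp_rw [mul_pow, ← Real.exp_nat_mul]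
        rw [Finset.prod_mul_distrib, Finset.prod_pow_eq_pow_sum, hr, ← Real.exp_sum,
          Finset.mul_sum]
        congr 2
        refine Finset.sum_congr rfl fun i _ => ?_
        ring

/-- The tilt is of order `δ` times the squared norm: each coefficient of the quadratic exponent is
`O(δ)`. -/
lemma abs_tiltPoly_le {p m : ℕ} (hpm : p ≤ 2 * m) {δ : ℝ} (hδ : 0 ≤ δ) (hsmall : p * δ ≤ 1 / 2)
    {a τ : ℝ} (hτ : 1 / 2 ≤ τ ^ 2) (hτ' : |1 - τ ^ 2| ≤ δ) (y : Fin p → ℝ)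
    (ha : |a| ≤ 2 * δ * ∑ i, |y i|) (k : Fin p) :
    |(tiltPoly a τ).eval (y k)| ≤ 14 * m * δ * ∑ i, y i ^ 2 := by
  have hp1 : (1 : ℝ) ≤ p := by
    have : 1 ≤ p := Nat.one_le_iff_ne_zero.2 (by rintro rfl; exact k.elim0)
    exact_mod_cast this
  have hpm' : (p : ℝ) ≤ 2 * m := by exact_mod_cast hpm
  set R := ∑ i, y i ^ 2 with hR
  have hR0 : 0 ≤ R := Finset.sum_nonneg fun i _ => sq_nonneg _
  have hkR : y k ^ 2 ≤ R :=
    Finset.single_le_sum (f := fun i => y i ^ 2) (fun i _ => sq_nonneg _) (Finset.mem_univ k)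
  have hCS : (∑ i, |y i|) ^ 2 ≤ p * R := by
    have := sq_sum_le_card_mul_sum_sq (s := Finset.univ) (f := fun i => |y i|)
    simpa [sq_abs, hR] using this
  have ha2 : a ^ 2 ≤ 2 * δ * R := by
    calc a ^ 2 = |a| ^ 2 := (sq_abs a).symm
      _ ≤ (2 * δ * ∑ i, |y i|) ^ 2 := pow_le_pow_left₀ (abs_nonneg _) ha 2
      _ = 4 * δ ^ 2 * (∑ i, |y i|) ^ 2 := by ring
      _ ≤ 4 * δ ^ 2 * (p * R) := by gcongr
      _ = 4 * (p * δ) * (δ * R) := by ring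
      _ ≤ 4 * (1 / 2) * (δ * R) := by gcongr
      _ = 2 * δ * R := by ring
  have hcross : |2 * a * y k| ≤ 2 * δ * (R + p * R) := by
    have h1 : (∑ i, |y i|) * (2 * |y k|) ≤ R + p * R := by
      rw [Finset.sum_mul]
      calc ∑ i, |y i| * (2 * |y k|) ≤ ∑ i, (y i ^ 2 + y k ^ 2) := by
            refine Finset.sum_le_sum fun i _ => ?_
            nlinarith [sq_nonneg (|y i| - |y k|), sq_abs (y i), sq_abs (y k)]
        _ = R + p * y k ^ 2 := by simp [Finset.sum_add_distrib, hR]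
        _ ≤ R + p * R := by gcongr
    calc |2 * a * y k| = |a| * (2 * |y k|) := by
          rw [abs_mul, abs_mul, abs_two]; ring
      _ ≤ (2 * δ * ∑ i, |y i|) * (2 * |y k|) := by gcongr
      _ = 2 * δ * ((∑ i, |y i|) * (2 * |y k|)) := by ring
      _ ≤ 2 * δ * (R + p * R) := by gcongr
  have hlast : |(1 - τ ^ 2) * y k ^ 2| ≤ δ * R := by
    rw [abs_mul, abs_of_nonneg (sq_nonneg (y k))]
    exact mul_le_mul hτ' hkR (sq_nonneg _) hδ
  have hinv : (2 * τ ^ 2)⁻¹ ≤ 1 := inv_le_one_of_one_le₀ (by linarith)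
  have hinv0 : 0 ≤ (2 * τ ^ 2)⁻¹ := by positivity
  rw [tiltPoly_eval, abs_mul, abs_of_nonneg hinv0]
  have hq : |2 * a * y k - a ^ 2 - (1 - τ ^ 2) * y k ^ 2|
      ≤ 2 * δ * (R + p * R) + 2 * δ * R + δ * R := by
    refine (abs_sub _ _).trans (add_le_add ((abs_sub _ _).trans (add_le_add hcross ?_)) hlast)
    rwa [abs_of_nonneg (sq_nonneg a)]
  have hδR : 0 ≤ δ * R := mul_nonneg hδ hR0
  calc (2 * τ ^ 2)⁻¹ * |2 * a * y k - a ^ 2 - (1 - τ ^ 2) * y k ^ 2|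
      ≤ 1 * |2 * a * y k - a ^ 2 - (1 - τ ^ 2) * y k ^ 2| := by gcongr
    _ ≤ 2 * δ * (R + p * R) + 2 * δ * R + δ * R := by rw [one_mul]; exact hq
    _ = (5 + 2 * p) * (δ * R) := by ring
    _ ≤ (14 * m) * (δ * R) := by
        gcongr
        linarith
    _ = 14 * m * δ * R := by ring

lemma taylor_remainder_le {w θ η R : ℝ} (hη : 0 < η) (hR : 0 ≤ R) (hθ : 0 ≤ θ) (hθη : θ ≤ η)
    (hw : |w| ≤ θ * R) (q : ℕ) :
    |Real.exp w - ∑ j ∈ Finset.range (q + 1), w ^ j / j.factorial|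
      ≤ θ ^ (q + 1) * ((q + 1).factorial / η ^ (q + 1)) * Real.exp (2 * η * R) := by
  calc |Real.exp w - ∑ j ∈ Finset.range (q + 1), w ^ j / j.factorial|
      ≤ |w| ^ (q + 1) * Real.exp |w| := abs_exp_sub_taylor_le w (q + 1)
    _ ≤ (θ * R) ^ (q + 1) * Real.exp (η * R) := by
        gcongr
        exact hw.trans (by gcongr)
    _ = θ ^ (q + 1) * R ^ (q + 1) * Real.exp (η * R) := by rw [mul_pow]
    _ ≤ θ ^ (q + 1) * ((q + 1).factorial / η ^ (q + 1) * Real.exp (η * R))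
          * Real.exp (η * R) := by
        gcongr
        exact pow_le_const_mul_exp hη hR _
    _ = θ ^ (q + 1) * ((q + 1).factorial / η ^ (q + 1))
          * (Real.exp (η * R) * Real.exp (η * R)) := by ring
    _ = _ := by
        rw [← Real.exp_add]
        congr 2
        ring

/-! ### The moment bound -/

lemma map_coord_eq {p : ℕ} {Cov : Matrix (Fin p) (Fin p) ℝ} (hdiag : ∀ i, Cov i i = 1)
    {μ : Measure (Fin p → ℝ)}
    (hμ : ∀ l : Fin p → ℝ, Measure.map (fun x => ∑ i, l i * x i) μ
      = gaussianReal 0 (Real.toNNReal (∑ i, ∑ j, l i * Cov i j * l j))) (i : Fin p) :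
    μ.map (fun x => x i) = gaussianReal 0 1 := by
  have h := hμ (Pi.single i 1)
  simpa [Pi.single_apply, hdiag] using h

/-- Resampling coordinate `k` independently keeps all marginals standard Gaussian. -/
lemma map_coord_update_eq {p : ℕ} {μ : Measure (Fin p → ℝ)} [IsProbabilityMeasure μ]
    (hμ : ∀ i, μ.map (fun x => x i) = gaussianReal 0 1) (k i : Fin p) :
    ((μ.prod (gaussianReal 0 1)).map (fun w => Function.update w.1 k w.2)).map (fun x => x i)
      = gaussianReal 0 1 := by
  have hm : Measurable (fun w : (Fin p → ℝ) × ℝ => Function.update w.1 k w.2) := by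
    refine measurable_pi_iff.2 fun i => ?_
    by_cases hi : i = k
    · subst hi
      simp only [Function.update_self]
      fun_prop
    · simp only [Function.update_of_ne hi]
      fun_prop
  rw [Measure.map_map (by fun_prop) hm]
  by_cases hi : i = k
  · subst hi
    have : (fun x : Fin p → ℝ => x i) ∘ (fun w : (Fin p → ℝ) × ℝ => Function.update w.1 i w.2)
        = Prod.snd := by ext w; simp
    rw [this, measurePreserving_snd.map_eq]
  · have : (fun x : Fin p → ℝ => x i) ∘ (fun w : (Fin p → ℝ) × ℝ => Function.update w.1 k w.2)
        = (fun x => x i) ∘ Prod.fst := by ext w; simp [hi]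
    rw [this, ← Measure.map_map (by fun_prop) (by fun_prop), measurePreserving_fst.map_eq, hμ]

/-- The quantitative form of the moment bound when the correlations are at most a small `δ`. -/
lemma abs_moment_le {p q m : ℕ} (hm : 1 ≤ m) (hpm : p ≤ 2 * m) {c₀ c₁ : ℝ} (hc₀ : 0 < c₀)
    (hc₁0 : 0 < c₁) (hc₁ : c₁ < 1) {ψ : ℝ → ℝ} (hψ : Measurable ψ)
    (hb : ∀ x, |ψ x| ≤ c₀ * Real.exp (c₁ * x ^ 2 / (4 * m)))
    (horth : ∀ k ≤ 2 * q, ∫ x, ψ x * HePoly k x ∂(gaussianReal 0 1) = 0)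
    {Cov : Matrix (Fin p) (Fin p) ℝ} (hpd : Cov.PosDef) (hdiag : ∀ i, Cov i i = 1)
    {δ : ℝ} (hδ : 0 ≤ δ) (hoff : ∀ i j, i ≠ j → |Cov i j| ≤ δ)
    (hsmall : p * δ ≤ 1 / 2) (hsmall' : 14 * m * δ ≤ (1 - c₁) / (16 * m))
    {r : Fin p → ℕ} (hr1 : ∀ i, 1 ≤ r i) (hr : ∑ i, r i = 2 * m) {k : Fin p} (hk : r k = 1)
    {μ : Measure (Fin p → ℝ)} [IsProbabilityMeasure μ]
    (hμ : ∀ l : Fin p → ℝ, Measure.map (fun x => ∑ i, l i * x i) μ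
      = gaussianReal 0 (Real.toNNReal (∑ i, ∑ j, l i * Cov i j * l j))) :
    |∫ x, ∏ i, ψ (x i) ^ r i ∂μ|
      ≤ 2 * c₀ ^ (2 * m) * ((14 * m * δ) ^ (q + 1)
          * ((q + 1).factorial / ((1 - c₁) / (16 * m)) ^ (q + 1)))
        * ∫ z, Real.exp ((1 + c₁) / 2 * z ^ 2 / 2) ∂(gaussianReal 0 1) := by
  have hm0 : (0 : ℝ) < m := by exact_mod_cast hm
  have hm1 : (1 : ℝ) ≤ m := by exact_mod_cast hm
  set η := (1 - c₁) / (16 * m) with hη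
  have hη0 : 0 < η := div_pos (by linarith) (by positivity)
  set c₂ := (1 + c₁) / 2 with hc₂
  have hc₂1 : c₂ < 1 := by rw [hc₂]; linarith
  set θ := 14 * m * δ with hθ
  have hθ0 : 0 ≤ θ := by positivity
  set A := θ ^ (q + 1) * ((q + 1).factorial / η ^ (q + 1)) with hA
  have hA0 : 0 ≤ A := by positivity
  have hb' : ∀ x, |ψ x| ≤ c₀ * Real.exp (c₁ / (2 * m) * x ^ 2 / 2) := by
    intro x
    refine (hb x).trans (le_of_eq ?_)
    congr 2
    field_simp
    ring
  have hc' : c₁ / (2 * m) < 1 := by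
    rw [div_lt_one (by positivity)]
    linarith
  obtain ⟨u, τ, hτ0, hτ, hτ', huk, hub, hCu⟩ := exists_regression hpd hdiag hδ hoff hsmall k
  have hτinv : τ⁻¹ ≤ 2 := by
    rw [inv_le_comm₀ hτ0 (by norm_num)]
    nlinarith
  set a : (Fin p → ℝ) → ℝ := fun x => x k - ∑ i, u i * x i with ha
  set F : (Fin p → ℝ) → ℝ := fun x => ∏ i ∈ Finset.univ.erase k, ψ (x i) ^ r i with hF
  set D : (Fin p → ℝ) → ℝ → ℝ := fun x z => Real.exp ((tiltPoly (a x) τ).eval z)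
      - ∑ j ∈ Finset.range (q + 1), (tiltPoly (a x) τ).eval z ^ j / j.factorial with hD
  have hprod : ∀ x t, ∏ i, ψ (Function.update x k t i) ^ r i = F x * ψ t := by
    intro x t
    rw [← Finset.mul_prod_erase _ _ (Finset.mem_univ k), Function.update_self, hk, pow_one,
      mul_comm, hF]
    congr 1
    exact Finset.prod_congr rfl fun i hi => by rw [Function.update_of_ne (Finset.mem_erase.1 hi).1]
  have hmarg := map_coord_eq hdiag hμ
  -- The regression does not involve coordinate `k`, because `u k = 1`.
  have ha_le : ∀ x z, |a x| ≤ 2 * δ * ∑ i, |Function.update x k z i| := by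
    intro x z
    have h1 : a x = -∑ i ∈ Finset.univ.erase k, u i * x i := by
      simp only [ha]
      rw [← Finset.add_sum_erase _ _ (Finset.mem_univ k), huk]
      ring
    rw [h1, abs_neg, Finset.mul_sum]
    calc |∑ i ∈ Finset.univ.erase k, u i * x i|
        ≤ ∑ i ∈ Finset.univ.erase k, |u i * x i| := Finset.abs_sum_le_sum_abs _ _
      _ ≤ ∑ i ∈ Finset.univ.erase k, 2 * δ * |Function.update x k z i| := by
          refine Finset.sum_le_sum fun i hi => ?_
          have hik := (Finset.mem_erase.1 hi).1
          rw [abs_mul, Function.update_of_ne hik]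
          exact mul_le_mul_of_nonneg_right (hub i hik) (abs_nonneg _)
      _ ≤ ∑ i, 2 * δ * |Function.update x k z i| :=
          Finset.sum_le_sum_of_subset_of_nonneg (Finset.erase_subset _ _)
            fun i _ _ => by positivity
  have hpt : ∀ x z, |F x * (ψ z * D x z)| ≤ c₀ ^ (2 * m) * A *
      Real.exp (c₂ / (4 * m) * ∑ i, (r i : ℝ) * Function.update x k z i ^ 2) := by
    intro x z
    set y := Function.update x k z with hy
    have hyk : y k = z := by simp [hy]
    have h1 := abs_prod_pow_le hr hb y
    rw [hy, hprod, ← hy] at h1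
    have h2 := abs_tiltPoly_le hpm hδ hsmall hτ hτ' y (ha_le x z) k
    rw [hyk, ← hθ] at h2
    have hR0 : 0 ≤ ∑ i, y i ^ 2 := Finset.sum_nonneg fun i _ => sq_nonneg _
    have h3 : |D x z| ≤ A * Real.exp (2 * η * ∑ i, y i ^ 2) :=
      taylor_remainder_le hη0 hR0 hθ0 hsmall' h2 q
    have hRS : ∑ i, y i ^ 2 ≤ ∑ i, (r i : ℝ) * y i ^ 2 := by
      refine Finset.sum_le_sum fun i _ => ?_
      have : (1 : ℝ) ≤ r i := by exact_mod_cast hr1 i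
      nlinarith [sq_nonneg (y i)]
    rw [← mul_assoc, abs_mul]
    calc |F x * ψ z| * |D x z|
        ≤ (c₀ ^ (2 * m) * Real.exp (c₁ / (4 * m) * ∑ i, (r i : ℝ) * y i ^ 2))
          * (A * Real.exp (2 * η * ∑ i, (r i : ℝ) * y i ^ 2)) := by
          refine mul_le_mul h1 (h3.trans ?_) (abs_nonneg _) (by positivity)
          gcongr
      _ = c₀ ^ (2 * m) * A * (Real.exp (c₁ / (4 * m) * ∑ i, (r i : ℝ) * y i ^ 2)
          * Real.exp (2 * η * ∑ i, (r i : ℝ) * y i ^ 2)) := by ring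
      _ = _ := by
          rw [← Real.exp_add, ← add_mul]
          congr 3
          rw [hη, hc₂]
          field_simp
          ring
  have hupd : Measurable (fun w : (Fin p → ℝ) × ℝ => Function.update w.1 k w.2) := by
    refine measurable_pi_iff.2 fun i => ?_
    by_cases hi : i = k
    · subst hi
      simp only [Function.update_self]
      fun_prop
    · simp only [Function.update_of_ne hi]
      fun_prop
  have ham : Measurable a := by simp only [ha]; fun_prop
  have hΦ : Measurable (fun w : (Fin p → ℝ) × ℝ =>
      Function.update w.1 k (w.1 k - ∑ i, u i * w.1 i + τ * w.2)) :=
    hupd.comp (measurable_fst.prodMk ((ham.comp measurable_fst).add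
      (measurable_snd.const_mul τ)))
  have hHm : Measurable (fun x : Fin p → ℝ => ∏ i, ψ (x i) ^ r i) := by fun_prop
  have hHi : Integrable (fun x : Fin p → ℝ => ∏ i, ψ (x i) ^ r i) μ :=
    ((integral_exp_quadratic_le hm hr hc₁ hmarg).1.const_mul (c₀ ^ (2 * m))).mono'
      hHm.aestronglyMeasurable (Filter.Eventually.of_forall fun y => abs_prod_pow_le hr hb y)
  have hmap := map_regression_eq hpd hμ huk hCu
  have hFub : ∫ x, ∏ i, ψ (x i) ^ r i ∂μ
      = ∫ x, F x * ∫ z, ψ (a x + τ * z) ∂(gaussianReal 0 1) ∂μ := by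
    have hi : Integrable (fun w : (Fin p → ℝ) × ℝ => F w.1 * ψ (a w.1 + τ * w.2))
        (μ.prod (gaussianReal 0 1)) := by
      rw [← hmap] at hHi
      have h := (integrable_map_measure hHm.aestronglyMeasurable hΦ.aemeasurable).1 hHi
      refine h.congr (Filter.Eventually.of_forall fun w => ?_)
      simp only [Function.comp_apply]
      rw [hprod]
    calc ∫ x, ∏ i, ψ (x i) ^ r i ∂μ
        = ∫ w, F w.1 * ψ (a w.1 + τ * w.2) ∂(μ.prod (gaussianReal 0 1)) := by
          conv_lhs => rw [← hmap]
          rw [integral_map hΦ.aemeasurable hHm.aestronglyMeasurable]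
          simp_rw [hprod]
          rfl
      _ = _ := by
          rw [integral_prod _ hi]
          simp_rw [integral_const_mul]
  -- The majorant is a function of `Function.update x k z`, whose coordinates are standard Gaussian.
  have hmaj := integral_exp_quadratic_le hm hr hc₂1 (map_coord_update_eq hmarg k)
  set g : (Fin p → ℝ) × ℝ → ℝ := fun w =>
    Real.exp (c₂ / (4 * m) * ∑ i, (r i : ℝ) * Function.update w.1 k w.2 i ^ 2) with hg
  have hEm : Measurable
      (fun y : Fin p → ℝ => Real.exp (c₂ / (4 * m) * ∑ i, (r i : ℝ) * y i ^ 2)) := by fun_prop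
  have hgi : Integrable g (μ.prod (gaussianReal 0 1)) :=
    (integrable_map_measure hEm.aestronglyMeasurable hupd.aemeasurable).1 hmaj.1
  have hgle : ∫ w, g w ∂(μ.prod (gaussianReal 0 1))
      ≤ ∫ z, Real.exp (c₂ * z ^ 2 / 2) ∂(gaussianReal 0 1) := by
    have h := hmaj.2
    rwa [integral_map hupd.aemeasurable hEm.aestronglyMeasurable] at h
  have hDm : ∀ x, Measurable (fun z => ψ z * D x z) := by
    intro x
    refine hψ.mul ?_
    simp only [hD]
    have : Measurable (fun z => (tiltPoly (a x) τ).eval z) :=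
      (tiltPoly (a x) τ).continuous.measurable
    fun_prop
  have hinner : ∀ᵐ x ∂μ, ‖F x * ∫ z, ψ (a x + τ * z) ∂(gaussianReal 0 1)‖
      ≤ ∫ z, 2 * (c₀ ^ (2 * m) * A) * g (x, z) ∂(gaussianReal 0 1) := by
    filter_upwards [hgi.prod_right_ae] with x hx
    have hdom := hx.const_mul (c₀ ^ (2 * m) * A)
    have hpt' : ∀ z, ‖F x * (ψ z * D x z)‖ ≤ c₀ ^ (2 * m) * A * g (x, z) := fun z => hpt x z
    have hFi : Integrable (fun z => F x * (ψ z * D x z)) (gaussianReal 0 1) :=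
      hdom.mono' ((hDm x).const_mul _).aestronglyMeasurable (Filter.Eventually.of_forall hpt')
    by_cases hF0 : F x = 0
    · rw [hF0, zero_mul, norm_zero]
      refine integral_nonneg fun z => ?_
      simp only [hg, Pi.zero_apply]
      positivity
    have hi : Integrable (fun z => ψ z * D x z) (gaussianReal 0 1) := by
      refine (hFi.const_mul (F x)⁻¹).congr (Filter.Eventually.of_forall fun z => ?_)
      simp only
      rw [inv_mul_cancel_left₀ hF0]
    have hsplit : F x * ∫ z, ψ (a x + τ * z) ∂(gaussianReal 0 1)
        = τ⁻¹ * ∫ z, F x * (ψ z * D x z) ∂(gaussianReal 0 1) := by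
      rw [integral_shift_eq_remainder hψ hc' hb' horth hτ0 hi, mul_left_comm, integral_const_mul]
    have htwo : ∫ z, 2 * (c₀ ^ (2 * m) * A) * g (x, z) ∂(gaussianReal 0 1)
        = 2 * ∫ z, c₀ ^ (2 * m) * A * g (x, z) ∂(gaussianReal 0 1) := by
      rw [← integral_const_mul]
      simp_rw [mul_assoc]
    rw [hsplit, htwo, norm_mul, Real.norm_eq_abs, abs_of_pos (inv_pos.2 hτ0)]
    exact mul_le_mul hτinv
      (norm_integral_le_of_norm_le hdom (Filter.Eventually.of_forall hpt')) (norm_nonneg _)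
      (by norm_num)
  rw [hFub]
  have hgi' := hgi.const_mul (2 * (c₀ ^ (2 * m) * A))
  refine (norm_integral_le_of_norm_le hgi'.integral_prod_left hinner).trans ?_
  rw [← integral_prod _ hgi', integral_const_mul, ← mul_assoc 2]
  exact mul_le_mul_of_nonneg_left hgle (by positivity)

/-- **Smallness of mixed moments of a function orthogonal to low-degree polynomials,
under weakly correlated Gaussians.**  If `ψ` grows at most like `c₀ exp(c₁x²/(4m))` and is
orthogonal (w.r.t. the standard Gaussian) to all polynomials of degree `≤ 2q`, then for any
covariance matrix `Σ ∈ ℝ^{p×p}` with unit diagonal and off-diagonal entries `≤ C d^{ε-1/2}`,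
any exponents `r₁+⋯+r_p = 2m` with some `r_k = 1`, and `g ~ N(0,Σ)`,
`|E[∏_k ψ(g_k)^{r_k}]| ≤ C′ d^{(q+1)(ε−1/2)}` for `d` large, where `C′` depends only on
`c₀, c₁, C, q, m`. -/
theorem isolated_index_moment_bound (c₀ c₁ C : ℝ) (q m : ℕ)
    (hc₀ : 0 < c₀) (hc₁0 : 0 < c₁) (hc₁ : c₁ < 1) (hC : 0 < C)
    (hq : 1 ≤ q) (hm : 1 ≤ m) :
    ∃ C' : ℝ, 0 < C' ∧
      ∀ p : ℕ, 1 ≤ p → p ≤ 2 * m →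
      ∀ ψ : ℝ → ℝ, Measurable ψ →
        (∀ x : ℝ, |ψ x| ≤ c₀ * Real.exp (c₁ * x ^ 2 / (4 * m))) →
        (∀ k ≤ 2 * q, ∫ x, ψ x * HePoly k x ∂(gaussianReal 0 1) = 0) →
        ∀ ε : ℝ, 0 < ε →
          ∃ d₀ : ℕ, ∀ d : ℕ, d₀ ≤ d →
            ∀ Cov : Matrix (Fin p) (Fin p) ℝ, Cov.PosDef →
              (∀ i, Cov i i = 1) →
              (∀ i j, i ≠ j → |Cov i j| ≤ C * (d : ℝ) ^ (ε - 1 / 2)) →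
              ∀ r : Fin p → ℕ, (∀ i, 1 ≤ r i) → (∑ i, r i = 2 * m) → (∃ i, r i = 1) →
                ∀ μ : Measure (Fin p → ℝ), IsProbabilityMeasure μ →
                  (∀ l : Fin p → ℝ,
                    Measure.map (fun x => ∑ i, l i * x i) μ
                      = gaussianReal 0 (Real.toNNReal (∑ i, ∑ j, l i * Cov i j * l j))) →
                  |∫ x, ∏ i, ψ (x i) ^ r i ∂μ|
                    ≤ C' * (d : ℝ) ^ ((q + 1 : ℝ) * (ε - 1 / 2)) := by
  have hm0 : (0 : ℝ) < m := by exact_mod_cast hm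
  set G₁ := ∫ z, Real.exp (c₁ * z ^ 2 / 2) ∂(gaussianReal 0 1) with hG₁
  set G₂ := ∫ z, Real.exp ((1 + c₁) / 2 * z ^ 2 / 2) ∂(gaussianReal 0 1) with hG₂
  have hG₁0 : 0 ≤ G₁ := integral_nonneg fun z => (Real.exp_pos _).le
  have hG₂0 : 0 ≤ G₂ := integral_nonneg fun z => (Real.exp_pos _).le
  set η := (1 - c₁) / (16 * m) with hη
  have hη0 : 0 < η := div_pos (by linarith) (by positivity)
  set B := 2 * c₀ ^ (2 * m) * ((14 * m * C) ^ (q + 1) * ((q + 1).factorial / η ^ (q + 1))) * G₂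
    with hB
  have hB0 : 0 ≤ B := by positivity
  have hA0 : 0 ≤ c₀ ^ (2 * m) * G₁ := by positivity
  refine ⟨c₀ ^ (2 * m) * G₁ + B + 1, by positivity, ?_⟩
  intro p hp hpm ψ hψ hb horth ε hε
  rcases le_or_gt (1 / 2) ε with hε2 | hε2
  · -- For `ε ≥ 1 / 2` the claimed bound does not decay, and a uniform bound suffices.
    refine ⟨1, fun d hd Cov hpd hdiag hoff r hr1 hr hk μ hμp hμ => ?_⟩
    have hmarg := map_coord_eq hdiag hμ
    obtain ⟨hi, hle⟩ := integral_exp_quadratic_le hm hr hc₁ hmarg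
    have h1 : |∫ x, ∏ i, ψ (x i) ^ r i ∂μ| ≤ c₀ ^ (2 * m) * G₁ := by
      refine (norm_integral_le_of_norm_le (f := fun x => ∏ i, ψ (x i) ^ r i) (hi.const_mul (c₀ ^ (2 * m)))
        (Filter.Eventually.of_forall fun y => abs_prod_pow_le hr hb y)).trans ?_
      rw [integral_const_mul]
      gcongr
    have h2 : 1 ≤ (d : ℝ) ^ ((q + 1 : ℝ) * (ε - 1 / 2)) :=
      Real.one_le_rpow (by exact_mod_cast hd) (mul_nonneg (by positivity) (by linarith))
    calc |∫ x, ∏ i, ψ (x i) ^ r i ∂μ| ≤ (c₀ ^ (2 * m) * G₁ + B + 1) * 1 := by linarith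
      _ ≤ _ := by gcongr
  · have hlim : Filter.Tendsto (fun d : ℕ => C * (d : ℝ) ^ (ε - 1 / 2)) Filter.atTop (nhds 0) := by
      have h := ((tendsto_rpow_neg_atTop (y := 1 / 2 - ε) (by linarith)).comp
        tendsto_natCast_atTop_atTop).const_mul C
      rw [mul_zero] at h
      refine h.congr fun d => ?_
      simp only [Function.comp_apply]
      congr 2
      ring
    obtain ⟨d₀, hd₀⟩ := Filter.eventually_atTop.1
      ((hlim.eventually_le_const (u := 1 / (4 * (m : ℝ))) (by positivity)).and
        (hlim.eventually_le_const (u := η / (14 * m)) (div_pos hη0 (by positivity))))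
    refine ⟨d₀, fun d hd Cov hpd hdiag hoff r hr1 hr hk μ hμp hμ => ?_⟩
    obtain ⟨h1, h2⟩ := hd₀ d hd
    obtain ⟨k, hk⟩ := hk
    have hδ : 0 ≤ C * (d : ℝ) ^ (ε - 1 / 2) := by positivity
    have hpm' : (p : ℝ) ≤ 2 * m := by exact_mod_cast hpm
    rw [le_div_iff₀ (by positivity)] at h1 h2
    have h := abs_moment_le hm hpm hc₀ hc₁0 hc₁ hψ hb horth hpd hdiag hδ hoff
      (by nlinarith) (by linarith) hr1 hr hk hμ
    have hpow : ((d : ℝ) ^ (ε - 1 / 2)) ^ (q + 1) = (d : ℝ) ^ ((q + 1 : ℝ) * (ε - 1 / 2)) := by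
      rw [← Real.rpow_mul_natCast (by positivity)]
      congr 1
      push_cast
      ring
    calc |∫ x, ∏ i, ψ (x i) ^ r i ∂μ| ≤ _ := h
      _ = B * (d : ℝ) ^ ((q + 1 : ℝ) * (ε - 1 / 2)) := by
          rw [hB, ← hpow, ← mul_assoc (14 * (m : ℝ)), mul_pow (14 * (m : ℝ) * C)]
          ring
      _ ≤ _ := by
          gcongr
          linarith
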